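/- arXiv:2604.05146 — 4 statements merged into one kernel-verified Lean document; each statement's English description precedes it below -/
import Mathlib

section
/- For every real number ζ > 41/2, there exists a constant c ∈ ℕ (depending only on ζ) such that every finite simple bipartite graph G with maximum degree Δ(G) ≥ c and |V(G)| ≥ ζ·Δ(G) satisfies χ_e(G) ≤ ⌈Δ(G)/2⌉ + 1. -/
/-- A proper coloring of `G` with `k` colors whose color classes pairwise differ
in size by at most one. -/
def SimpleGraph.IsEquitableColoring {V : Type*} [Fintype V] [DecidableEq V]
    (G : SimpleGraph V) (k : ℕ) (C : V → Fin k) : Prop :=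
  (∀ u v, G.Adj u v → C u ≠ C v) ∧
    ∀ i j : Fin k,
      (Finset.univ.filter fun v => C v = i).card ≤
        (Finset.univ.filter fun v => C v = j).card + 1

/-- The equitable chromatic number: the least `k` admitting an equitable `k`-coloring. -/
noncomputable def SimpleGraph.equitableChromaticNumber {V : Type*} [Fintype V] [DecidableEq V]
    (G : SimpleGraph V) : ℕ :=
  sInf {k | ∃ C : V → Fin k, G.IsEquitableColoring k C}

lemma slot_coloring {V : Type} [DecidableEq V] {k : ℕ} (hk : 0 < k) (β : Fin k → ℕ) (S : Finset V)
    (hS : ∑ i, β i = S.card) (f : (Σ i, Fin (β i)) → V) (hf : Function.Injective f)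
    (hfS : ∀ x, f x ∈ S) :
    ∃ c : V → Fin k, (∀ v ∈ S, ∃ y, f ⟨c v, y⟩ = v) ∧
      ∀ i, (S.filter fun v => c v = i).card = β i := by
  classical
  have himg : Finset.univ.image f = S := by
    apply Finset.eq_of_subset_of_card_le
    · intro v hv
      obtain ⟨x, -, rfl⟩ := Finset.mem_image.1 hv
      exact hfS x
    · rw [Finset.card_image_of_injective _ hf, ← hS]
      simp
  have hsurj : ∀ v ∈ S, ∃ x, f x = v := by
    intro v hv
    rw [← himg] at hv
    obtain ⟨x, -, h⟩ := Finset.mem_image.1 hv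
    exact ⟨x, h⟩
  let c : V → Fin k := fun v => if h : ∃ x, f x = v then h.choose.1 else ⟨0, hk⟩
  have hc : ∀ x, c (f x) = x.1 := by
    intro x
    have h : ∃ y, f y = f x := ⟨x, rfl⟩
    have h2 : h.choose = x := hf h.choose_spec
    simp only [c, dif_pos h]
    rw [h2]
  refine ⟨c, ?_, ?_⟩
  · intro v hv
    obtain ⟨⟨i, y⟩, rfl⟩ := hsurj v hv
    rw [hc]
    exact ⟨y, rfl⟩
  · intro i
    have : (S.filter fun v => c v = i) =
        (Finset.univ : Finset (Fin (β i))).image (fun y => f ⟨i, y⟩) := by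
      ext v
      simp only [Finset.mem_filter, Finset.mem_image, Finset.mem_univ, true_and]
      constructor
      · rintro ⟨hv, rfl⟩
        obtain ⟨⟨i, y⟩, rfl⟩ := hsurj v hv
        rw [hc]
        exact ⟨y, rfl⟩
      · rintro ⟨y, rfl⟩
        exact ⟨hfS _, hc _⟩
    rw [this, Finset.card_image_of_injective]
    · simp
    · intro y z h
      have := hf h
      simpa using this

lemma core_coloring {V : Type} [Fintype V] [DecidableEq V] (G : SimpleGraph V) [DecidableRel G.Adj]
    (A B : Finset V) (hAB : ∀ v, v ∈ A ↔ v ∉ B)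
    (hA : ∀ u ∈ A, ∀ v ∈ A, ¬ G.Adj u v) (hB : ∀ u ∈ B, ∀ v ∈ B, ¬ G.Adj u v)
    {k : ℕ} (hk : 0 < k) (α β : Fin k → ℕ) (hα : ∑ i, α i = A.card) (hβ : ∑ i, β i = B.card)
    (M : Finset (Fin k)) (hM : ∀ i, i ∉ M → α i = 0 ∨ β i = 0)
    (hM2 : ∀ i ∈ M, β i * G.maxDegree + ∑ j ∈ M, α j ≤ A.card) :
    ∃ C : V → Fin k, (∀ u v, G.Adj u v → C u ≠ C v) ∧
      ∀ i, (Finset.univ.filter fun v => C v = i).card = α i + β i := by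
  classical
  have e : (Σ i, Fin (β i)) ≃ B := Fintype.equivOfCardEq (by simp [hβ])
  obtain ⟨cB, -, hcB⟩ := slot_coloring hk β B hβ (fun x => (e x : V))
    (Subtype.val_injective.comp e.injective) (fun x => (e x).2)
  let N : Fin k → Finset V := fun i => (B.filter fun v => cB v = i).biUnion fun v => G.neighborFinset v
  have hN : ∀ i, (N i).card ≤ β i * G.maxDegree := by
    intro i
    rw [← hcB i]
    exact Finset.card_biUnion_le_card_mul _ _ _ (fun v _ => by
      rw [G.card_neighborFinset_eq_degree]; exact G.degree_le_maxDegree v)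
  have hall := (Finset.all_card_le_biUnion_card_iff_exists_injective
    (fun x : (Σ i, Fin (α i)) => A \ N x.1)).1 (by
      intro S
      by_cases h : ∃ x ∈ S, x.1 ∉ M
      · obtain ⟨x, hx, hxM⟩ := h
        have h0 : β x.1 = 0 := by
          rcases hM _ hxM with h | h
          · exact absurd x.2.2 (by omega)
          · exact h
        have h1 : N x.1 = ∅ := by
          have := hN x.1
          rw [h0, zero_mul] at this
          exact Finset.card_eq_zero.1 (by omega)
        calc S.card ≤ Fintype.card (Σ i, Fin (α i)) := Finset.card_le_univ _
          _ = A.card := by simp [hα]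
          _ = (A \ N x.1).card := by rw [h1]; simp
          _ ≤ _ := Finset.card_le_card
            (Finset.subset_biUnion_of_mem (fun x : (Σ i, Fin (α i)) => A \ N x.1) hx)
      · push Not at h
        rcases S.eq_empty_or_nonempty with rfl | ⟨x, hx⟩
        · simp
        · have h1 : S ⊆ M.sigma (fun i => (Finset.univ : Finset (Fin (α i)))) := by
            intro y hy
            simp [h y hy]
          have h2 := Finset.card_le_card h1
          rw [Finset.card_sigma] at h2
          simp only [Finset.card_univ, Fintype.card_fin] at h2
          have h3 := hM2 _ (h x hx)
          have h4 := hN x.1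
          have h5 := Finset.le_card_sdiff (N x.1) A
          calc S.card ≤ (A \ N x.1).card := by omega
          _ ≤ _ := Finset.card_le_card
            (Finset.subset_biUnion_of_mem (fun x : (Σ i, Fin (α i)) => A \ N x.1) hx))
  obtain ⟨f, hf, hfA⟩ := hall
  obtain ⟨cA, hcA1, hcA⟩ := slot_coloring hk α A hα f hf (fun x => (Finset.mem_sdiff.1 (hfA x)).1)
  have key : ∀ u ∈ A, ∀ v ∈ B, G.Adj v u → cA u ≠ cB v := by
    intro u hu v hv huv heq
    obtain ⟨y, hy⟩ := hcA1 u hu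
    have h := (Finset.mem_sdiff.1 (hfA ⟨cA u, y⟩)).2
    rw [hy] at h
    apply h
    simp only [N, Finset.mem_biUnion, Finset.mem_filter, SimpleGraph.mem_neighborFinset]
    exact ⟨v, ⟨hv, heq.symm⟩, huv⟩
  refine ⟨fun v => if v ∈ B then cB v else cA v, ?_, ?_⟩
  · intro u v huv
    by_cases hu : u ∈ B <;> by_cases hv : v ∈ B
    · exact absurd huv (hB u hu v hv)
    · simp only [hu, hv, if_true, if_false]
      exact (key v ((hAB v).2 hv) u hu huv).symm
    · simp only [hu, hv, if_true, if_false]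
      exact key u ((hAB u).2 hu) v hv huv.symm
    · exact absurd huv (hA u ((hAB u).2 hu) v ((hAB v).2 hv))
  · intro i
    rw [← hcA i, ← hcB i, ← Finset.card_union_of_disjoint]
    · congr 1
      ext v
      by_cases hv : v ∈ B <;> simp [hv, hAB]
    · rw [Finset.disjoint_left]
      intro v h1 h2
      exact (hAB v).1 (Finset.mem_filter.1 h1).1 (Finset.mem_filter.1 h2).1

lemma exists_cross (f : ℕ → ℕ) (b k : ℕ) (h0 : f 0 ≤ b) (hk : b < f k) :
    ∃ x < k, f x ≤ b ∧ b < f (x + 1) := by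
  induction k with
  | zero => omega
  | succ k ih =>
    by_cases h : b < f k
    · obtain ⟨x, hx, h⟩ := ih h
      exact ⟨x, by omega, h⟩
    · exact ⟨k, by omega, by omega, hk⟩

lemma sum_min_sub (q b N : ℕ) : ∑ j ∈ Finset.range N, min q (b - j * q) = min b (N * q) := by
  induction N with
  | zero => simp
  | succ N ih =>
    rw [Finset.sum_range_succ, ih, Nat.succ_mul]
    omega

lemma half_bound {V : Type} [Fintype V] [DecidableEq V] (G : SimpleGraph V) [DecidableRel G.Adj]
    (A B : Finset V) (hAB : ∀ v, v ∈ A ↔ v ∉ B)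
    (hA : ∀ u ∈ A, ∀ v ∈ A, ¬ G.Adj u v) (hB : ∀ u ∈ B, ∀ v ∈ B, ¬ G.Adj u v)
    (hle : B.card ≤ A.card) (hD : 1000 ≤ G.maxDegree)
    (hn : 20 * G.maxDegree ≤ Fintype.card V) :
    ∃ C : V → Fin ((G.maxDegree + 1) / 2 + 1),
      G.IsEquitableColoring ((G.maxDegree + 1) / 2 + 1) C := by
  classical
  have hcard : A.card + B.card = Fintype.card V := by
    have : A = Bᶜ := by ext v; simp [hAB]
    rw [this]
    exact Finset.card_compl_add_card B
  have hcore := fun {k : ℕ} (hk : 0 < k) => core_coloring G A B hAB hA hB hk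
  generalize hDD : G.maxDegree = D at *
  generalize hnn : Fintype.card V = n at *
  generalize haa : A.card = a at *
  generalize hbb : B.card = b at *
  generalize hkk : (D + 1) / 2 + 1 = k at *
  have hk0 : 0 < k := by omega
  have hkD : D ≤ 2 * k := by omega
  have hkD2 : k ≤ D := by omega
  -- base class size and remainder
  obtain ⟨s, r, hsr, hrk⟩ : ∃ s r, k * s + r = n ∧ r < k :=
    ⟨n / k, n % k, Nat.div_add_mod n k, Nat.mod_lt _ hk0⟩
  have hs1 : 1 ≤ s := by
    by_contra h
    have : s = 0 := by omega
    subst this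
    omega
  let t : ℕ → ℕ := fun i => if i < r then s + 1 else s
  have ht : ∀ i, t i = s ∨ t i = s + 1 := by
    intro i; simp only [t]; split_ifs <;> simp
  let T : ℕ → ℕ := fun x => ∑ i ∈ Finset.range x, t i
  have hT : ∀ x, T x = x * s + min x r := by
    intro x
    induction x with
    | zero => simp [T]
    | succ x ih =>
      have : T (x + 1) = T x + t x := Finset.sum_range_succ _ _
      rw [this, ih, Nat.succ_mul]
      simp only [t]
      split_ifs <;> omega
  have hTk : T k = n := by rw [hT, Nat.min_eq_right hrk.le, hsr]
  obtain ⟨x, hxk, hx1, hx2⟩ := exists_cross T b k (by simp [T]) (by omega)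
  have hTx : T (x + 1) = T x + t x := Finset.sum_range_succ _ _
  obtain ⟨res, hres⟩ : ∃ res, b = T x + res := ⟨b - T x, by omega⟩
  have hress : res ≤ s := by have := ht x; omega
  -- room: at least 8 classes remain
  obtain ⟨y, hy⟩ : ∃ y, k = x + y := ⟨k - x, by omega⟩
  have hy8 : 8 ≤ y := by
    by_contra hcon
    have h1 : T x = x * s + min x r := hT x
    have h2 : y * s ≤ 7 * s := Nat.mul_le_mul_right _ (by omega)
    have h3 : k * s = x * s + y * s := by rw [hy, Nat.add_mul]
    have h4 : 500 * s ≤ k * s := Nat.mul_le_mul_right _ (by omega)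
    omega
  let q := s / 8 + 1
  have hq8 : s ≤ 8 * q := by simp only [q]; omega
  have hqs : q ≤ s := by simp only [q]; omega
  let βn : ℕ → ℕ := fun i => if i < x then t i else min q (res - (i - x) * q)
  have hβt : ∀ i, βn i ≤ t i := by
    intro i
    have := ht i
    simp only [βn]
    split_ifs <;> omega
  have hβsum : ∑ i ∈ Finset.range k, βn i = b := by
    rw [hy, Finset.sum_range_add]
    have h1 : ∑ i ∈ Finset.range x, βn i = T x := by
      apply Finset.sum_congr rfl
      intro i hi
      simp only [βn, if_pos (Finset.mem_range.1 hi)]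
    have h2 : ∑ i ∈ Finset.range y, βn (x + i) = min res (y * q) := by
      rw [← sum_min_sub]
      apply Finset.sum_congr rfl
      intro i hi
      simp [βn]
    have h3 : 8 * q ≤ y * q := Nat.mul_le_mul_right _ hy8
    omega
  have hαsum : ∑ i ∈ Finset.range k, (t i - βn i) = a := by
    have : ∑ i ∈ Finset.range k, (t i - βn i) + ∑ i ∈ Finset.range k, βn i = T k := by
      rw [← Finset.sum_add_distrib]
      apply Finset.sum_congr rfl
      intro i _
      have := hβt i
      omega
    omega
  let M : Finset (Fin k) := Finset.univ.filter fun i => x ≤ i.1 ∧ i.1 < x + 8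
  have hMcard : M.card ≤ 8 := by
    have : M.card ≤ (Finset.Ico x (x + 8)).card := by
      apply Finset.card_le_card_of_injOn (fun i => i.1)
      · intro i hi
        simp only [M, Finset.coe_filter, Finset.mem_univ, true_and, Set.mem_ofPred_eq] at hi
        simp; omega
      · intro i _ j _ h
        exact Fin.ext h
    simpa using this
  have hfinal : q * D + 8 * (s + 1) ≤ a := by
    have h1 : s * D ≤ 2 * n := by
      calc s * D ≤ s * (2 * k) := Nat.mul_le_mul_left _ hkD
        _ = 2 * (k * s) := by ring
        _ ≤ 2 * n := by omega
    have h2 : 8 * (q * D) ≤ s * D + 8 * D := by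
      calc 8 * (q * D) = (8 * q) * D := by ring
        _ ≤ (s + 8) * D := Nat.mul_le_mul_right _ (by simp only [q]; omega)
        _ = _ := by ring
    have h4 : 500 * s ≤ k * s := Nat.mul_le_mul_right _ (by omega)
    omega
  obtain ⟨C, hC1, hC2⟩ := hcore hk0 (fun i => t i.1 - βn i.1) (fun i => βn i.1)
    (by rw [← hαsum, Finset.sum_range]) (by rw [← hβsum, Finset.sum_range]) M
    (by
      intro i hi
      simp only [M, Finset.mem_filter, Finset.mem_univ, true_and] at hi
      by_cases h : i.1 < x
      · left; simp [βn, h]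
      · right
        have h3 : 8 * q ≤ (i.1 - x) * q := Nat.mul_le_mul_right _ (by omega)
        simp only [βn, if_neg h]
        omega)
    (by
      intro i hi
      simp only [M, Finset.mem_filter, Finset.mem_univ, true_and] at hi
      have h1 : βn i.1 ≤ q := by
        simp only [βn, if_neg (not_lt.2 hi.1)]
        omega
      have h2 : ∑ j ∈ M, (t j.1 - βn j.1) ≤ 8 * (s + 1) := by
        calc ∑ j ∈ M, (t j.1 - βn j.1) ≤ M.card • (s + 1) :=
              Finset.sum_le_card_nsmul _ _ _ (fun j _ => by have := ht j.1; omega)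
          _ ≤ 8 * (s + 1) := by rw [smul_eq_mul]; exact Nat.mul_le_mul_right _ hMcard
      have h3 : βn i.1 * D ≤ q * D := Nat.mul_le_mul_right _ h1
      omega)
  refine ⟨C, hC1, ?_⟩
  intro i j
  rw [hC2, hC2]
  have h1 := ht i.1
  have h2 := ht j.1
  have h3 := hβt i.1
  have h4 := hβt j.1
  omega

theorem equitable_chromatic_bound_bipartite (ζ : ℝ) (hζ : ζ > 41 / 2) :
    ∃ c : ℕ, ∀ (V : Type) [Fintype V] [DecidableEq V] (G : SimpleGraph V)
      [DecidableRel G.Adj],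
      (∃ A B : Set V, A ∪ B = Set.univ ∧ Disjoint A B ∧
        (∀ u ∈ A, ∀ v ∈ A, ¬ G.Adj u v) ∧ (∀ u ∈ B, ∀ v ∈ B, ¬ G.Adj u v)) →
      c ≤ G.maxDegree →
      ζ * (G.maxDegree : ℝ) ≤ (Fintype.card V : ℝ) →
      G.equitableChromaticNumber ≤ (G.maxDegree + 1) / 2 + 1 := by
  refine ⟨1000, ?_⟩
  intro V _ _ G _ hbip hD hn
  classical
  obtain ⟨A, B, hU, hdis, hA, hB⟩ := hbip
  have hcardV : 20 * G.maxDegree ≤ Fintype.card V := by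
    have h0 : (0 : ℝ) ≤ G.maxDegree := Nat.cast_nonneg _
    have : (20 : ℝ) * G.maxDegree ≤ Fintype.card V := by nlinarith
    exact_mod_cast this
  have hmem : ∀ v, v ∈ A ↔ v ∉ B := by
    intro v
    constructor
    · intro h1 h2
      exact Set.disjoint_left.1 hdis h1 h2
    · intro h
      have hv : v ∈ A ∪ B := by rw [hU]; trivial
      exact hv.resolve_right h
  apply Nat.sInf_le
  rcases le_total B.toFinset.card A.toFinset.card with h | h
  · exact half_bound G A.toFinset B.toFinset (by simpa using hmem) (by simpa using hA)
      (by simpa using hB) h hD hcardV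
  · exact half_bound G B.toFinset A.toFinset
      (by intro v; simp [hmem v]) (by simpa using hB) (by simpa using hA) h hD hcardV
end

section
/- Let G be a finite simple bipartite graph with bipartition (A, B), where 𝔞 := |A| ≤ |B| =: 𝔟, maximum degree Δ ≥ 2, and let k := ⌈Δ/2⌉ + 1. Suppose |V(G)| = kq + r with q ≥ 1 and 0 ≤ r < k. Let t be a nonnegative integer, let x, u be nonnegative integers, and let S ⊆ A satisfy |S| = xq + u, where 0 ≤ u ≤ x and u ≤ r. Put M := 𝔞 − |S| and H := min{ q, ⌊(𝔟 − t(q+1)) / (Δ − 1)⌋ }. If r − u ≤ k − x, t ≤ k − x, H ≥ 0, and t·H ≥ M, then V(G) can be partitioned into k pairwise disjoint independent sets, exactly r of which have size q + 1 and the remaining k − r of which have size q. -/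
theorem greedy_aux {V ι : Type} [DecidableEq V] [DecidableEq ι]
    (X : Finset V) (d : ι → ℕ) (N : ι → Finset V) (I : Finset ι)
    (h : ∀ i ∈ I, ∑ j ∈ I, d j + (N i).card ≤ X.card) :
    ∃ P : ι → Finset V, (∀ i j, i ≠ j → Disjoint (P i) (P j)) ∧
      (∀ i, P i ⊆ X) ∧ (∀ i ∈ I, Disjoint (P i) (N i)) ∧
      (∀ i ∈ I, (P i).card = d i) ∧ (∀ i, i ∉ I → P i = ∅) := by
  induction I using Finset.induction_on with
  | empty => exact ⟨fun _ => ∅, by simp, by simp, by simp, by simp, by simp⟩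
  | insert a I ha ih =>
    obtain ⟨P, h1, h2, h3, h4, h5⟩ := ih (by
      intro i hi
      have := h i (Finset.mem_insert_of_mem hi)
      rw [Finset.sum_insert ha] at this
      omega)
    have hU : (I.biUnion P).card = ∑ j ∈ I, d j := by
      rw [Finset.card_biUnion (fun i _ j _ hij => h1 i j hij)]
      exact Finset.sum_congr rfl h4
    have hc : d a ≤ (X \ (I.biUnion P ∪ N a)).card := by
      have e1 := h a (Finset.mem_insert_self a I)
      rw [Finset.sum_insert ha] at e1
      have e2 := Finset.le_card_sdiff (I.biUnion P ∪ N a) X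
      have e3 := Finset.card_union_le (I.biUnion P) (N a)
      omega
    obtain ⟨Q, hQ, hQc⟩ := Finset.exists_subset_card_eq hc
    have hQ' : ∀ v ∈ Q, v ∈ X ∧ (∀ i ∈ I, v ∉ P i) ∧ v ∉ N a := by
      intro v hv
      have := hQ hv
      simp only [Finset.mem_sdiff, Finset.mem_union, Finset.mem_biUnion] at this
      refine ⟨this.1, fun i hi hvi => this.2 (Or.inl ⟨i, hi, hvi⟩), fun hv => this.2 (Or.inr hv)⟩
    have hd : ∀ j, j ≠ a → Disjoint Q (P j) := by
      intro j hj
      by_cases hjI : j ∈ I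
      · rw [Finset.disjoint_left]
        exact fun v hv => (hQ' v hv).2.1 j hjI
      · rw [h5 j hjI]; exact Finset.disjoint_empty_right _
    refine ⟨fun i => if i = a then Q else P i, ?_, ?_, ?_, ?_, ?_⟩
    · intro i j hij
      by_cases hi : i = a
      · have hj : j ≠ a := fun e => hij (hi.trans e.symm)
        simpa [hi, hj] using hd j hj
      · by_cases hj : j = a
        · simpa [hi, hj] using (hd i hi).symm
        · simpa [hi, hj] using h1 i j hij
    · intro i
      by_cases hi : i = a
      · simpa [hi, Finset.subset_iff] using fun v hv => (hQ' v hv).1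
      · simpa [hi] using h2 i
    · intro i hiI
      by_cases hi : i = a
      · subst hi
        simpa [Finset.disjoint_left] using fun v hv => (hQ' v hv).2.2
      · simpa [hi] using h3 i ((Finset.mem_insert.1 hiI).resolve_left hi)
    · intro i hiI
      by_cases hi : i = a
      · simpa [hi] using hQc
      · simpa [hi] using h4 i ((Finset.mem_insert.1 hiI).resolve_left hi)
    · intro i hiI
      rw [Finset.mem_insert, not_or] at hiI
      simpa [hiI.1] using h5 i hiI.2

theorem greedy_univ {V ι : Type} [DecidableEq V] [DecidableEq ι] [Fintype ι]
    (X : Finset V) (d : ι → ℕ) (N : ι → Finset V)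
    (h : ∀ i, ∑ j, d j + (N i).card ≤ X.card) :
    ∃ P : ι → Finset V, (∀ i j, i ≠ j → Disjoint (P i) (P j)) ∧
      (∀ i, P i ⊆ X) ∧ (∀ i, Disjoint (P i) (N i)) ∧ (∀ i, (P i).card = d i) := by
  obtain ⟨P, h1, h2, h3, h4, -⟩ := greedy_aux X d N Finset.univ (fun i _ => h i)
  exact ⟨P, h1, h2, fun i => h3 i (Finset.mem_univ i), fun i => h4 i (Finset.mem_univ i)⟩

theorem spread_aux {ι : Type} [DecidableEq ι] [Fintype ι] (H : ℕ) (I : Finset ι) :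
    ∀ M : ℕ, M ≤ I.card * H →
    ∃ h : ι → ℕ, (∀ i, h i ≤ H) ∧ (∀ i, i ∉ I → h i = 0) ∧ ∑ i, h i = M := by
  suffices hs : ∀ M : ℕ, M ≤ I.card * H →
      ∃ h : ι → ℕ, (∀ i, h i ≤ H) ∧ (∀ i, i ∉ I → h i = 0) ∧ ∑ i ∈ I, h i = M by
    intro M hM
    obtain ⟨h, h1, h2, h3⟩ := hs M hM
    refine ⟨h, h1, h2, ?_⟩
    rw [← h3]
    exact (Finset.sum_subset (Finset.subset_univ I) (fun i _ hi => h2 i hi)).symm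
  induction I using Finset.induction_on with
  | empty =>
    intro M hM
    exact ⟨fun _ => 0, by simp, by simp, by simp at hM; simp [hM]⟩
  | insert a I ha ih =>
    intro M hM
    rw [Finset.card_insert_of_notMem ha, add_mul, one_mul] at hM
    obtain ⟨h, h1, h2, h3⟩ := ih (M - min M H) (by omega)
    refine ⟨fun i => if i = a then min M H else h i, ?_, ?_, ?_⟩
    · intro i
      dsimp only
      split_ifs
      · exact min_le_right _ _
      · exact h1 i
    · intro i hi
      rw [Finset.mem_insert, not_or] at hi
      simpa [hi.1] using h2 i hi.2
    · rw [Finset.sum_insert ha]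
      have : ∑ i ∈ I, (if i = a then min M H else h i) = ∑ i ∈ I, h i := by
        apply Finset.sum_congr rfl
        intro i hi
        have : i ≠ a := fun e => ha (e ▸ hi)
        simp [this]
      rw [this, h3]
      simp only [if_true]
      omega

theorem card_interval (k a b : ℕ) (hb : b ≤ k) :
    (Finset.univ.filter fun i : Fin k => a ≤ i.val ∧ i.val < b).card = b - a := by
  rw [← Nat.card_Ico, ← Finset.card_map Fin.valEmbedding]
  congr 1
  ext j
  simp only [Finset.mem_map, Finset.mem_filter, Finset.mem_univ, true_and, Fin.valEmbedding_apply,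
    Finset.mem_Ico]
  constructor
  · rintro ⟨i, hi, rfl⟩; exact hi
  · intro hj; exact ⟨⟨j, by omega⟩, hj, rfl⟩

theorem sum_interval (k a b c : ℕ) (hb : b ≤ k) :
    ∑ i : Fin k, (if a ≤ i.val ∧ i.val < b then c else 0) = (b - a) * c := by
  rw [← Finset.sum_filter, Finset.sum_const, card_interval k a b hb, smul_eq_mul]


theorem construction_lemma {V : Type} [Fintype V] [DecidableEq V]
    (G : SimpleGraph V) [DecidableRel G.Adj]
    (A B : Finset V)
    (hcover : A ∪ B = Finset.univ) (hdisj : Disjoint A B)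
    (hAind : ∀ u ∈ A, ∀ v ∈ A, ¬ G.Adj u v)
    (hBind : ∀ u ∈ B, ∀ v ∈ B, ¬ G.Adj u v)
    (hab : A.card ≤ B.card)
    (hΔ : 2 ≤ G.maxDegree)
    (k q r : ℕ) (hk : k = (G.maxDegree + 1) / 2 + 1)
    (hq : 1 ≤ q) (hr : r < k) (hn : Fintype.card V = k * q + r)
    (t x u : ℕ) (S : Finset V) (hSA : S ⊆ A) (hScard : S.card = x * q + u)
    (hux : u ≤ x) (hur : u ≤ r)
    (M : ℕ) (hM : M = A.card - S.card)
    (H : ℤ)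
    (hH : H = min (q : ℤ) (((B.card : ℤ) - t * (q + 1)) / ((G.maxDegree : ℤ) - 1)))
    (hru : (r : ℤ) - u ≤ (k : ℤ) - x) (htk : (t : ℤ) ≤ (k : ℤ) - x)
    (hH0 : 0 ≤ H) (htH : (M : ℤ) ≤ t * H) :
    ∃ P : Fin k → Finset V,
      (∀ i j, i ≠ j → Disjoint (P i) (P j)) ∧
      Finset.univ.biUnion P = Finset.univ ∧
      (∀ i, ∀ v ∈ P i, ∀ w ∈ P i, ¬ G.Adj v w) ∧
      (Finset.univ.filter fun i => (P i).card = q + 1).card = r ∧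
      (∀ i, (P i).card = q ∨ (P i).card = q + 1) := by
  have hxk : x + t ≤ k := by omega
  have hruk : x + (r - u) ≤ k := by omega
  have hSle := Finset.card_le_card hSA
  have hABc : A.card + B.card = k * q + r := by
    rw [← hn, ← Finset.card_union_of_disjoint hdisj, hcover, Finset.card_univ]
  lift H to ℕ using hH0 with Hn
  have hMH : M ≤ t * Hn := by exact_mod_cast htH
  have hHq : Hn ≤ q := by
    have : (Hn : ℤ) ≤ q := hH ▸ min_le_left _ _
    exact_mod_cast this
  have hHB : t * (q + 1) + G.maxDegree * Hn ≤ B.card + Hn := by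
    have h1 : (Hn : ℤ) ≤ ((B.card : ℤ) - t * (q + 1)) / ((G.maxDegree : ℤ) - 1) :=
      hH ▸ min_le_right _ _
    have h2 : (0 : ℤ) < (G.maxDegree : ℤ) - 1 := by omega
    rw [Int.le_ediv_iff_mul_le h2] at h1
    zify
    linarith
  clear hH htH
  generalize hD : G.maxDegree = D at *
  -- the target sizes
  obtain ⟨s, hs⟩ : ∃ s : Fin k → ℕ, s = fun i =>
    q + (if 0 ≤ i.val ∧ i.val < u then 1 else 0) +
      (if x ≤ i.val ∧ i.val < x + (r - u) then 1 else 0) := ⟨_, rfl⟩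
  have hs2 : ∀ i, s i = q ∨ s i = q + 1 := by
    intro i
    simp only [hs]
    split_ifs <;> omega
  have hssum : ∑ i, s i = k * q + r := by
    rw [hs, Finset.sum_add_distrib, Finset.sum_add_distrib, sum_interval _ _ _ _ (by omega),
      sum_interval _ _ _ _ hruk]
    simp
    omega
  have hscard : (Finset.univ.filter fun i => s i = q + 1).card = r := by
    have h1 : ∑ i, s i = ∑ i : Fin k, (q + if s i = q + 1 then 1 else 0) := by
      apply Finset.sum_congr rfl
      intro i _
      have := hs2 i
      split_ifs <;> omega
    rw [Finset.sum_add_distrib, hssum] at h1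
    rw [Finset.card_filter]
    simp at h1
    simpa using h1.symm
  obtain ⟨h, hh1, hh2, hh3⟩ := spread_aux Hn
    (Finset.univ.filter fun i : Fin k => x ≤ i.val ∧ i.val < x + t) M (by
      rw [card_interval _ _ _ hxk]; simpa using hMH)
  have hh0 : ∀ i : Fin k, ¬ (x ≤ i.val ∧ i.val < x + t) → h i = 0 := by
    intro i hi
    exact hh2 i (by simpa using hi)
  obtain ⟨d1, hd1⟩ : ∃ d : Fin k → ℕ, d = fun i => if i.val < x then s i else 0 := ⟨_, rfl⟩
  obtain ⟨d3, hd3⟩ : ∃ d : Fin k → ℕ, d = fun i =>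
    if x ≤ i.val ∧ i.val < x + t then s i - h i else 0 := ⟨_, rfl⟩
  obtain ⟨d4, hd4⟩ : ∃ d : Fin k → ℕ, d = fun i => if x + t ≤ i.val then s i else 0 := ⟨_, rfl⟩
  have hdsum : ∀ i, d1 i + h i + d3 i + d4 i = s i := by
    intro i
    have e1 := hh0 i
    have e2 := hh1 i
    have e3 := hs2 i
    simp only [hd1, hd3, hd4]
    split_ifs <;> omega
  have hS1 : ∑ i, d1 i = S.card := by
    have : ∀ i, d1 i = (if 0 ≤ i.val ∧ i.val < x then q else 0) +
        (if 0 ≤ i.val ∧ i.val < u then 1 else 0) := by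
      intro i
      simp only [hd1, hs]
      split_ifs <;> omega
    rw [Finset.sum_congr rfl (fun i _ => this i), Finset.sum_add_distrib,
      sum_interval _ _ _ _ (by omega), sum_interval _ _ _ _ (by omega), hScard]
    simp
  have hS3 : ∑ i, d3 i + M ≤ t * (q + 1) := by
    have e : ∑ i : Fin k, (if x ≤ i.val ∧ i.val < x + t then q + 1 else 0) = t * (q + 1) := by
      rw [sum_interval _ _ _ _ hxk]; simp
    rw [← e, ← hh3, ← Finset.sum_add_distrib]
    apply Finset.sum_le_sum
    intro i _
    have e1 := hh0 i
    have e2 := hh1 i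
    have e3 := hs2 i
    simp only [hd3]
    split_ifs <;> omega
  have hS4 : S.card + M + ∑ i, d3 i + ∑ i, d4 i = k * q + r := by
    rw [← hssum, ← hS1, ← hh3, ← Finset.sum_add_distrib, ← Finset.sum_add_distrib,
      ← Finset.sum_add_distrib]
    exact Finset.sum_congr rfl (fun i _ => hdsum i)
  obtain ⟨P1, p1d, p1s, -, p1c⟩ := greedy_univ S d1 (fun _ => ∅) (by simp [hS1])
  obtain ⟨P2, p2d, p2s, -, p2c⟩ := greedy_univ (A \ S) h (fun _ => ∅) (by
    simp [hh3, Finset.card_sdiff_of_subset hSA, hM])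
  have hN : ∀ i, ((P2 i).biUnion fun v => G.neighborFinset v).card ≤ h i * D := by
    intro i
    rw [← p2c i]
    apply Finset.card_biUnion_le_card_mul
    intro v _
    rw [G.card_neighborFinset_eq_degree, ← hD]
    exact G.degree_le_maxDegree v
  obtain ⟨P3, p3d, p3s, p3n, p3c⟩ := greedy_univ B d3
    (fun i => (P2 i).biUnion fun v => G.neighborFinset v) (by
      intro i
      have e1 := hN i
      have e2 : h i ≤ M := by
        rw [← hh3]
        exact Finset.single_le_sum (fun _ _ => Nat.zero_le _) (Finset.mem_univ i)
      have e3 := hh1 i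
      have e4 : h i * D + Hn ≤ D * Hn + h i := by
        obtain ⟨c, hc⟩ := Nat.exists_eq_add_of_le e3
        have : c ≤ D * c := Nat.le_mul_of_pos_left c (by omega)
        rw [hc]
        nlinarith
      omega)
  have hU : (Finset.univ.biUnion P3).card = ∑ i, d3 i := by
    rw [Finset.card_biUnion (fun i _ j _ hij => p3d i j hij)]
    exact Finset.sum_congr rfl (fun i _ => p3c i)
  have hUB : Finset.univ.biUnion P3 ⊆ B := by
    intro v hv
    obtain ⟨i, -, hi⟩ := Finset.mem_biUnion.1 hv
    exact p3s i hi
  obtain ⟨P4, p4d, p4s, -, p4c⟩ := greedy_univ (B \ Finset.univ.biUnion P3) d4 (fun _ => ∅) (by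
    intro i
    rw [Finset.card_sdiff_of_subset hUB, hU, Finset.card_empty]
    omega)
  have m2 : ∀ i, ∀ v ∈ P2 i, v ∈ A ∧ v ∉ S := fun i v hv => Finset.mem_sdiff.1 (p2s i hv)
  have m4 : ∀ i, ∀ v ∈ P4 i, v ∈ B ∧ ∀ j, v ∉ P3 j := by
    intro i v hv
    have := Finset.mem_sdiff.1 (p4s i hv)
    exact ⟨this.1, fun j hj => this.2 (Finset.mem_biUnion.2 ⟨j, Finset.mem_univ j, hj⟩)⟩
  have hAB : ∀ v, v ∈ A → v ∈ B → False := fun v h1 h2 => Finset.disjoint_left.1 hdisj h1 h2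
  have d12 : ∀ i j, Disjoint (P1 i) (P2 j) := fun i j =>
    Finset.disjoint_left.2 fun v h1 h2 => (m2 j v h2).2 (p1s i h1)
  have d13 : ∀ i j, Disjoint (P1 i) (P3 j) := fun i j =>
    Finset.disjoint_left.2 fun v h1 h2 => hAB v (hSA (p1s i h1)) (p3s j h2)
  have d14 : ∀ i j, Disjoint (P1 i) (P4 j) := fun i j =>
    Finset.disjoint_left.2 fun v h1 h2 => hAB v (hSA (p1s i h1)) (m4 j v h2).1
  have d23 : ∀ i j, Disjoint (P2 i) (P3 j) := fun i j =>
    Finset.disjoint_left.2 fun v h1 h2 => hAB v (m2 i v h1).1 (p3s j h2)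
  have d24 : ∀ i j, Disjoint (P2 i) (P4 j) := fun i j =>
    Finset.disjoint_left.2 fun v h1 h2 => hAB v (m2 i v h1).1 (m4 j v h2).1
  have d34 : ∀ i j, Disjoint (P3 i) (P4 j) := fun i j =>
    Finset.disjoint_left.2 fun v h1 h2 => (m4 j v h2).2 i h1
  have hcard : ∀ i, (P1 i ∪ P2 i ∪ P3 i ∪ P4 i).card = s i := by
    intro i
    rw [Finset.card_union_of_disjoint, Finset.card_union_of_disjoint,
      Finset.card_union_of_disjoint (d12 i i), p1c, p2c, p3c, p4c, hdsum]
    · rw [Finset.disjoint_union_left]; exact ⟨d13 i i, d23 i i⟩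
    · rw [Finset.disjoint_union_left, Finset.disjoint_union_left]
      exact ⟨⟨d14 i i, d24 i i⟩, d34 i i⟩
  have hdis : ∀ i j, i ≠ j →
      Disjoint (P1 i ∪ P2 i ∪ P3 i ∪ P4 i) (P1 j ∪ P2 j ∪ P3 j ∪ P4 j) := by
    intro i j hij
    simp only [Finset.disjoint_union_left, Finset.disjoint_union_right]
    exact ⟨⟨⟨⟨⟨⟨p1d i j hij, (d12 j i).symm⟩, (d13 j i).symm⟩, (d14 j i).symm⟩,
      ⟨⟨⟨d12 i j, p2d i j hij⟩, (d23 j i).symm⟩, (d24 j i).symm⟩⟩,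
      ⟨⟨⟨d13 i j, d23 i j⟩, p3d i j hij⟩, (d34 j i).symm⟩⟩,
      ⟨⟨⟨d14 i j, d24 i j⟩, d34 i j⟩, p4d i j hij⟩⟩
  refine ⟨fun i => P1 i ∪ P2 i ∪ P3 i ∪ P4 i, hdis, ?_, ?_, ?_, ?_⟩
  · apply Finset.eq_univ_of_card
    rw [Finset.card_biUnion (fun i _ j _ hij => hdis i j hij), hn, ← hssum]
    exact Finset.sum_congr rfl (fun i _ => hcard i)
  · intro i v hv w hw
    simp only [Finset.mem_union] at hv hw
    have c1 : ∀ v ∈ P1 i, i.val < x := by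
      intro v hv
      have e := Finset.card_pos.2 ⟨v, hv⟩
      rw [p1c, hd1] at e
      by_contra hc
      simp [hc] at e
    have c2 : ∀ v ∈ P2 i, x ≤ i.val ∧ i.val < x + t := by
      intro v hv
      have e := Finset.card_pos.2 ⟨v, hv⟩
      rw [p2c] at e
      by_contra hc
      have := hh0 i hc
      omega
    have c3 : ∀ v ∈ P3 i, x ≤ i.val ∧ i.val < x + t := by
      intro v hv
      have e := Finset.card_pos.2 ⟨v, hv⟩
      rw [p3c, hd3] at e
      by_contra hc
      simp [hc] at e
    have c4 : ∀ v ∈ P4 i, x + t ≤ i.val := by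
      intro v hv
      have e := Finset.card_pos.2 ⟨v, hv⟩
      rw [p4c, hd4] at e
      by_contra hc
      simp [hc] at e
    have h23 : ∀ v ∈ P2 i, ∀ w ∈ P3 i, ¬ G.Adj v w := by
      intro v hv w hw hadj
      exact Finset.disjoint_left.1 (p3n i) hw
        (Finset.mem_biUnion.2 ⟨v, hv, (G.mem_neighborFinset v w).2 hadj⟩)
    have a1 : ∀ v ∈ P1 i, v ∈ A := fun v hv => hSA (p1s i hv)
    rcases hv with ((hv | hv) | hv) | hv <;> rcases hw with ((hw | hw) | hw) | hw
    · exact hAind v (a1 v hv) w (a1 w hw)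
    · exact hAind v (a1 v hv) w (m2 i w hw).1
    · have := c1 v hv; have := c3 w hw; omega
    · have := c1 v hv; have := c4 w hw; omega
    · exact hAind v (m2 i v hv).1 w (a1 w hw)
    · exact hAind v (m2 i v hv).1 w (m2 i w hw).1
    · exact h23 v hv w hw
    · have := c2 v hv; have := c4 w hw; omega
    · have := c3 v hv; have := c1 w hw; omega
    · exact fun hadj => h23 w hw v hv hadj.symm
    · exact hBind v (p3s i hv) w (p3s i hw)
    · exact hBind v (p3s i hv) w (m4 i w hw).1
    · have := c4 v hv; have := c1 w hw; omega
    · have := c4 v hv; have := c2 w hw; omega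
    · exact hBind v (m4 i v hv).1 w (p3s i hw)
    · exact hBind v (m4 i v hv).1 w (m4 i w hw).1
  · simp only [hcard]
    exact hscard
  · intro i
    simp only [hcard]
    exact hs2 i
end

section
/- Let q ≥ 1, k ≥ 1, and r be integers with 0 ≤ r < k, and let a be an integer with 0 ≤ a ≤ (kq + r)/2. Then there exist integers x, u, M such that a = xq + u + M, 0 ≤ u ≤ x ≤ ⌊k/2⌋, u ≤ r, r − u ≤ k − x, and 0 ≤ M < q + k. -/
theorem normalization_lemma (q k r a : ℤ) (hq : 1 ≤ q) (hk : 1 ≤ k)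
    (hr0 : 0 ≤ r) (hrk : r < k) (ha0 : 0 ≤ a) (ha : 2 * a ≤ k * q + r) :
    ∃ x u M : ℤ, a = x * q + u + M ∧
      0 ≤ u ∧ u ≤ x ∧ x ≤ k / 2 ∧ u ≤ r ∧ r - u ≤ k - x ∧
      0 ≤ M ∧ M < q + k := by
  by_contra hne
  have key : ∀ n : ℕ, (n : ℤ) ≤ k / 2 → (n : ℤ) * q + max 0 (r + n - k) ≤ a := by
    intro n
    induction n with
    | zero => intro _; push_cast; simp only [zero_mul]; omega
    | succ n ih =>
      intro hn
      push_cast at hn ⊢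
      have h1 := ih (by omega)
      by_contra hc
      rw [add_mul] at hc
      apply hne
      refine ⟨n, max 0 (r + n - k), a - (n * q + max 0 (r + n - k)), by ring, ?_⟩
      generalize (n : ℤ) * q = t at *
      omega
  have h := key (k / 2).toNat (by omega)
  rw [Int.toNat_of_nonneg (by omega)] at h
  apply hne
  refine ⟨k / 2, max 0 (r + k / 2 - k), a - (k / 2 * q + max 0 (r + k / 2 - k)), by ring, ?_⟩
  have e : k * q = 2 * (k / 2 * q) + (k % 2) * q := by
    conv_lhs => rw [← Int.mul_ediv_add_emod k 2]
    ring
  have e2 : (k % 2) * q ≤ q := by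
    rcases Int.emod_two_eq_zero_or_one k with h | h <;> rw [h] <;> omega
  generalize k / 2 * q = t at *
  generalize k % 2 * q = s at *
  generalize k * q = w at *
  omega
end

section
/- Let n, k, Δ, b be integers with k ≥ 37, Δ ≥ 2, Δ − 1 ≤ 2k, 2b ≥ n, and n(k − 36) ≥ 41k² − 36k. Set q := ⌊n/k⌋ and t := ⌊k/4⌋. Then ⌊k/4⌋ · ⌊(b − t(q + 1)) / (Δ − 1)⌋ ≥ q + k. -/
theorem tL_ge_M_bound (n k Δ b q t : ℤ) (hk37 : 37 ≤ k) (hΔ2 : 2 ≤ Δ)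
    (hΔk : Δ - 1 ≤ 2 * k) (hb : 2 * b ≥ n)
    (hnk : n * (k - 36) ≥ 41 * k ^ 2 - 36 * k)
    (hq : q = n / k) (ht : t = k / 4) :
    t * ((b - t * (q + 1)) / (Δ - 1)) ≥ q + k := by
  have hn : 41 * k ≤ n := by
    by_contra h
    push Not at h
    have : n * (k - 36) ≤ 41 * k * (k - 36) :=
      mul_le_mul_of_nonneg_right h.le (by linarith)
    nlinarith
  have hqk : k * q ≤ n := by rw [hq]; exact Int.mul_ediv_self_le (by omega)
  have hq0 : 0 ≤ q := by rw [hq]; exact Int.ediv_nonneg (by omega) (by omega)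
  have ht1 : 4 * t ≤ k := by omega
  have ht2 : k - 4 ≤ 4 * t := by omega
  have hx : n - k ≤ 4 * (b - t * (q + 1)) := by
    have := mul_le_mul_of_nonneg_right ht1 (show 0 ≤ q + 1 by omega)
    linarith
  clear hq ht
  generalize b - t * (q + 1) = x at *
  have hL0 : 0 ≤ x / (Δ - 1) := Int.ediv_nonneg (by omega) (by omega)
  have hL1 : x < (x / (Δ - 1) + 1) * (Δ - 1) :=
    Int.lt_ediv_add_one_mul_self x (by omega)
  generalize x / (Δ - 1) = L at *
  have h2 : (L + 1) * (Δ - 1) ≤ (L + 1) * (2 * k) :=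
    mul_le_mul_of_nonneg_left hΔk (by omega)
  have h3 : n - 9 * k ≤ 8 * k * L := by linarith
  have h4 : (k - 4) * (n - 9 * k) ≤ (4 * t) * (8 * k * L) :=
    mul_le_mul ht2 h3 (by omega) (by omega)
  have h5 : k * (q + k) ≤ k * (t * L) := by linarith
  exact le_of_mul_le_mul_left h5 (by omega)
end
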